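/- Let n ≥ 2 and let −L, G be the Dirichlet MAC matrices. Let ε ∈ ℝ, A_ε := I + ε²·(−L) (a symmetric positive definite matrix), and S := Gᵀ·A_ε⁻¹·G. Suppose β ∈ (0,1] satisfies β²·⟨(−L)·(G·w), G·w⟩ ≤ ⟨G·Gᵀ·(G·w), G·w⟩ for every w ∈ ℝ^{n²}. If λ ∈ ℝ and p, φ ∈ ℝ^{n²} satisfy: p ≠ 0, the entries of p sum to 0, the entries of φ sum to 0, (Gᵀ·G)·φ = S·p, and φ + ε²·S·p = λ·p (i.e. λ is an eigenvalue of the preconditioned Schur complement 𝕊⁻¹·S, where 𝕊⁻¹ = (−L^c)⁻¹ + ε²·I with −L^c = Gᵀ·G acting on zero-mean vectors), then β² ≤ λ ≤ 1. -/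

import Mathlib

/-!
Write `M = -L`, `A = 1 + ε² M`, `g = G p`, `u = A⁻¹ g` and `v = G φ`. The equation
`Gᵀ G φ = Gᵀ u` says that `v` is the orthogonal projection of `u` onto the range of `G`, and
applying `G` to the eigenvalue equation gives `v + ε² G Gᵀ u = λ A u`.

* Upper bound: pairing with `u` gives `|v|² + ε² |Gᵀ u|² = λ ⟨A u, u⟩`. Here `|v|² ≤ |u|²`, and
  `|Gᵀ u|² ≤ ⟨M u, u⟩` because `M - G Gᵀ` is positive semidefinite, so `λ ≤ 1`.
* Lower bound: expanding `0 ≤ ⟨A (u - v), u - v⟩` with `⟨A u, v⟩ = ⟨g, v⟩ = ⟨g, u⟩ = ⟨A u, u⟩`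
  gives `⟨A u, u⟩ ≤ ⟨A v, v⟩`. The inf-sup bound on `v = G φ` then gives
  `β² ⟨A v, v⟩ ≤ |v|² + ε² |Gᵀ v|² = λ ⟨A u, u⟩`.

`schur_bounds` carries this out for abstract `M` and `G`. The MAC matrices enter through
`negL_eq`, a discrete form of `-Δ = -grad div + curl curl` in which the no-slip walls add a
nonnegative diagonal term, and through `Gmac_ker`: the kernel of `G` consists of the constants.
-/

open Matrix Kronecker

/-- `(n-1)×(n-1)` tridiagonal matrix with `2` on the diagonal and `-1` on the sub/super-diagonal. -/
noncomputable def TD (n : ℕ) : Matrix (Fin (n - 1)) (Fin (n - 1)) ℝ := fun i j =>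
  if i = j then 2 else if (i : ℕ) + 1 = (j : ℕ) ∨ (j : ℕ) + 1 = (i : ℕ) then -1 else 0

/-- `n×n` tridiagonal matrix with diagonal `(3,2,…,2,3)` and `-1` on the sub/super-diagonal. -/
noncomputable def TE (n : ℕ) : Matrix (Fin n) (Fin n) ℝ := fun i j =>
  if i = j then (if (i : ℕ) = 0 ∨ (i : ℕ) = n - 1 then 3 else 2)
  else if (i : ℕ) + 1 = (j : ℕ) ∨ (j : ℕ) + 1 = (i : ℕ) then -1 else 0

/-- `n×n` diagonal matrix `diag(1,0,…,0,1)`. -/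
noncomputable def E0 (n : ℕ) : Matrix (Fin n) (Fin n) ℝ := fun i j =>
  if i = j ∧ ((i : ℕ) = 0 ∨ (i : ℕ) = n - 1) then 1 else 0

/-- `n×(n-1)` bidiagonal matrix with `(B_D)_{i,i} = -1`, `(B_D)_{i+1,i} = 1`. -/
noncomputable def BD (n : ℕ) : Matrix (Fin n) (Fin (n - 1)) ℝ := fun i j =>
  if (i : ℕ) = (j : ℕ) then -1 else if (i : ℕ) = (j : ℕ) + 1 then 1 else 0

/-- Discrete negative vector Laplacian of the Dirichlet MAC discretization
(`h = 1`, `μ = 1`). -/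
noncomputable def negL (n : ℕ) :
    Matrix ((Fin n × Fin (n - 1)) ⊕ (Fin (n - 1) × Fin n))
      ((Fin n × Fin (n - 1)) ⊕ (Fin (n - 1) × Fin n)) ℝ :=
  Matrix.fromBlocks
    ((1 : Matrix (Fin n) (Fin n) ℝ) ⊗ₖ TD n + TE n ⊗ₖ (1 : Matrix (Fin (n - 1)) (Fin (n - 1)) ℝ))
    0 0
    ((1 : Matrix (Fin (n - 1)) (Fin (n - 1)) ℝ) ⊗ₖ TE n + TD n ⊗ₖ (1 : Matrix (Fin n) (Fin n) ℝ))

/-- Discrete gradient of the Dirichlet MAC discretization: `I_n ⊗ B_Dᵀ` stacked on top of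
`B_Dᵀ ⊗ I_n`. -/
noncomputable def Gmac (n : ℕ) :
    Matrix ((Fin n × Fin (n - 1)) ⊕ (Fin (n - 1) × Fin n)) (Fin n × Fin n) ℝ :=
  Matrix.fromRows ((1 : Matrix (Fin n) (Fin n) ℝ) ⊗ₖ (BD n)ᵀ)
    ((BD n)ᵀ ⊗ₖ (1 : Matrix (Fin n) (Fin n) ℝ))

/-- Eigenvalue bounds for an abstract pair `(M, G)`: only `G Gᵀ ≤ M`, the inf-sup bound on the
range of `G`, and `G p ≠ 0` are used. -/
lemma schur_bounds {ι κ : Type*} [Fintype ι] [DecidableEq ι] [Fintype κ]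
    (M : Matrix ι ι ℝ) (G : Matrix ι κ ℝ) (hM : (M - G * Gᵀ).PosSemidef)
    (ε β : ℝ) (hβ0 : 0 < β) (hβ1 : β ≤ 1)
    (hinfsup : ∀ w : κ → ℝ,
      β ^ 2 * (M.mulVec (G.mulVec w) ⬝ᵥ G.mulVec w) ≤
        (G * Gᵀ).mulVec (G.mulVec w) ⬝ᵥ G.mulVec w)
    (lam : ℝ) (p φ : κ → ℝ) (hGp : G.mulVec p ≠ 0)
    (hφ : (Gᵀ * G).mulVec φ = (Gᵀ * (1 + ε ^ 2 • M)⁻¹ * G).mulVec p)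
    (heig : φ + ε ^ 2 • (Gᵀ * (1 + ε ^ 2 • M)⁻¹ * G).mulVec p = lam • p) :
    β ^ 2 ≤ lam ∧ lam ≤ 1 := by
  have hGG : (G * Gᵀ).PosSemidef := by
    simpa using Matrix.posSemidef_self_mul_conjTranspose G
  have hMpsd : M.PosSemidef := by simpa using hM.add hGG
  have hA : (1 + ε ^ 2 • M).PosDef :=
    Matrix.PosDef.one.add_posSemidef (hMpsd.smul (sq_nonneg ε))
  have hAu : IsUnit (1 + ε ^ 2 • M).det := (Matrix.isUnit_iff_isUnit_det _).1 hA.isUnit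
  obtain ⟨u, hu⟩ : ∃ u, u = (1 + ε ^ 2 • M)⁻¹.mulVec (G.mulVec p) := ⟨_, rfl⟩
  obtain ⟨v, hv⟩ : ∃ v, v = G.mulVec φ := ⟨_, rfl⟩
  have hS : (Gᵀ * (1 + ε ^ 2 • M)⁻¹ * G).mulVec p = Gᵀ.mulVec u := by
    rw [hu]; simp only [Matrix.mulVec_mulVec, Matrix.mul_assoc]
  have hAug : (1 + ε ^ 2 • M).mulVec u = G.mulVec p := by
    rw [hu, Matrix.mulVec_mulVec, Matrix.mul_nonsing_inv _ hAu, Matrix.one_mulVec]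
  have hu0 : u ≠ 0 := by
    rintro rfl
    exact hGp (by rw [← hAug, Matrix.mulVec_zero])
  rw [hS] at hφ heig
  have hGv : Gᵀ.mulVec v = Gᵀ.mulVec u := by rw [hv, Matrix.mulVec_mulVec, hφ]
  have hadj : ∀ (w : κ → ℝ) (x : ι → ℝ), G.mulVec w ⬝ᵥ x = w ⬝ᵥ Gᵀ.mulVec x := by
    intro w x
    rw [Matrix.mulVec_transpose, dotProduct_comm, Matrix.dotProduct_mulVec, dotProduct_comm]
  have hproj : ∀ w : κ → ℝ, G.mulVec w ⬝ᵥ u = G.mulVec w ⬝ᵥ v := by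
    intro w; rw [hadj, hadj, hGv]
  have hGGx : ∀ x : ι → ℝ, (G * Gᵀ).mulVec x ⬝ᵥ x = Gᵀ.mulVec x ⬝ᵥ Gᵀ.mulVec x := by
    intro x; rw [← Matrix.mulVec_mulVec, hadj]
  have hAx : ∀ x y : ι → ℝ, (1 + ε ^ 2 • M).mulVec x ⬝ᵥ y =
      x ⬝ᵥ y + ε ^ 2 * (M.mulVec x ⬝ᵥ y) := by
    intro x y
    rw [Matrix.add_mulVec, Matrix.one_mulVec, Matrix.smul_mulVec, add_dotProduct,
      smul_dotProduct, smul_eq_mul]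
  have hpos : 0 < (1 + ε ^ 2 • M).mulVec u ⬝ᵥ u := by
    have := hA.dotProduct_mulVec_pos hu0
    rwa [star_trivial, dotProduct_comm] at this
  have hMGG : Gᵀ.mulVec u ⬝ᵥ Gᵀ.mulVec u ≤ M.mulVec u ⬝ᵥ u := by
    have := hM.dotProduct_mulVec_nonneg u
    rw [star_trivial, dotProduct_comm, Matrix.sub_mulVec, sub_dotProduct, hGGx] at this
    linarith
  have hvu : v ⬝ᵥ u = v ⬝ᵥ v := by rw [hv]; rw [hproj, hv]
  have hgv : (1 + ε ^ 2 • M).mulVec u ⬝ᵥ v = (1 + ε ^ 2 • M).mulVec u ⬝ᵥ u := by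
    rw [hAug, hproj]
  have hsymm : (1 + ε ^ 2 • M).mulVec v ⬝ᵥ u = (1 + ε ^ 2 • M).mulVec u ⬝ᵥ v := by
    have ht : (1 + ε ^ 2 • M)ᵀ = 1 + ε ^ 2 • M := by simpa using hA.isHermitian.eq
    rw [dotProduct_comm, Matrix.dotProduct_mulVec, ← Matrix.mulVec_transpose, ht]
  have henergy : v ⬝ᵥ v + ε ^ 2 * (Gᵀ.mulVec u ⬝ᵥ Gᵀ.mulVec u) =
      lam * ((1 + ε ^ 2 • M).mulVec u ⬝ᵥ u) := by
    have h := congrArg (fun q => G.mulVec q ⬝ᵥ u) heig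
    simp only [Matrix.mulVec_add, Matrix.mulVec_smul, add_dotProduct, smul_dotProduct,
      smul_eq_mul] at h
    rw [hadj (Gᵀ.mulVec u), ← hv, hvu, ← hAug] at h
    exact h
  constructor
  · have h0 : 0 ≤ (1 + ε ^ 2 • M).mulVec (u - v) ⬝ᵥ (u - v) := by
      have := hA.posSemidef.dotProduct_mulVec_nonneg (u - v)
      rwa [star_trivial, dotProduct_comm] at this
    rw [Matrix.mulVec_sub, sub_dotProduct, dotProduct_sub, dotProduct_sub, hsymm, hgv,
      hAx v v] at h0
    have hinf := hinfsup φ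
    rw [← hv, hGGx, hGv] at hinf
    have hvv : 0 ≤ v ⬝ᵥ v := by simpa using dotProduct_star_self_nonneg v
    have hb : β ^ 2 ≤ 1 := pow_le_one₀ hβ0.le hβ1
    have h1 : β ^ 2 * ((1 + ε ^ 2 • M).mulVec u ⬝ᵥ u) ≤
        β ^ 2 * (v ⬝ᵥ v + ε ^ 2 * (M.mulVec v ⬝ᵥ v)) :=
      mul_le_mul_of_nonneg_left (by linarith) (sq_nonneg β)
    have h2 := mul_le_mul_of_nonneg_left hinf (sq_nonneg ε)
    have h3 := mul_le_mul_of_nonneg_right hb hvv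
    exact le_of_mul_le_mul_right (by linarith) hpos
  · have h0 : 0 ≤ (u - v) ⬝ᵥ (u - v) := by simpa using dotProduct_star_self_nonneg (u - v)
    rw [sub_dotProduct, dotProduct_sub, dotProduct_sub, dotProduct_comm u v, hvu] at h0
    have h2 := mul_le_mul_of_nonneg_left hMGG (sq_nonneg ε)
    have h3 := hAx u u
    exact le_of_mul_le_mul_right (by linarith) hpos

lemma TD_eq (n : ℕ) : TD n = (BD n)ᵀ * BD n := by
  ext i j
  have hi := i.2
  have hj := j.2
  simp only [Matrix.mul_apply, Matrix.transpose_apply, TD, BD, Fin.ext_iff]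
  rw [Fin.sum_univ_eq_sum_range (fun k => (if k = (i : ℕ) then (-1 : ℝ) else
    if k = (i : ℕ) + 1 then 1 else 0) * (if k = (j : ℕ) then (-1 : ℝ) else
    if k = (j : ℕ) + 1 then 1 else 0)) n]
  -- the column `i` of `BD n` is supported on the two rows `i` and `i + 1`
  have hsub : ({(i : ℕ), (i : ℕ) + 1} : Finset ℕ) ⊆ Finset.range n := by
    intro k hk
    simp only [Finset.mem_insert, Finset.mem_singleton] at hk
    simp only [Finset.mem_range]; omega
  rw [← Finset.sum_subset hsub, Finset.sum_pair (by omega)]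
  · split_ifs <;> first | omega | norm_num
  · intro k _ hk
    simp only [Finset.mem_insert, Finset.mem_singleton, not_or] at hk
    simp [hk.1, hk.2]

lemma TE_eq (n : ℕ) (hn : 2 ≤ n) : TE n = BD n * (BD n)ᵀ + (2 : ℝ) • E0 n := by
  ext i j
  have hi := i.2
  have hj := j.2
  simp only [Matrix.add_apply, Matrix.smul_apply, Matrix.mul_apply, Matrix.transpose_apply,
    TE, E0, BD, Fin.ext_iff, smul_eq_mul]
  rw [Fin.sum_univ_eq_sum_range (fun k => (if (i : ℕ) = k then (-1 : ℝ) else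
    if (i : ℕ) = k + 1 then 1 else 0) * (if (j : ℕ) = k then (-1 : ℝ) else
    if (j : ℕ) = k + 1 then 1 else 0)) (n - 1)]
  -- the row `i` of `BD n` is supported on the columns `i - 1` and `i`, those that exist
  have hsub : (Finset.range (n - 1)).filter (fun k => (i : ℕ) = k ∨ (i : ℕ) = k + 1) ⊆
      Finset.range (n - 1) := Finset.filter_subset _ _
  rw [← Finset.sum_subset hsub]
  · rcases Nat.eq_zero_or_pos (i : ℕ) with h0 | h0
    · have : (Finset.range (n - 1)).filter (fun k => (i : ℕ) = k ∨ (i : ℕ) = k + 1) = {0} := by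
        ext k; simp only [Finset.mem_filter, Finset.mem_range, Finset.mem_singleton]; omega
      rw [this, Finset.sum_singleton]
      split_ifs <;> first | omega | norm_num
    · by_cases h1 : (i : ℕ) = n - 1
      · have : (Finset.range (n - 1)).filter (fun k => (i : ℕ) = k ∨ (i : ℕ) = k + 1) =
            {(i : ℕ) - 1} := by
          ext k; simp only [Finset.mem_filter, Finset.mem_range, Finset.mem_singleton]; omega
        rw [this, Finset.sum_singleton]
        split_ifs <;> first | omega | norm_num
      · have : (Finset.range (n - 1)).filter (fun k => (i : ℕ) = k ∨ (i : ℕ) = k + 1) =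
            {(i : ℕ) - 1, (i : ℕ)} := by
          ext k
          simp only [Finset.mem_filter, Finset.mem_range, Finset.mem_singleton,
            Finset.mem_insert]
          omega
        rw [this, Finset.sum_pair (by omega)]
        split_ifs <;> first | omega | norm_num
  · intro k hk hk'
    simp only [Finset.mem_filter, not_and, not_or] at hk'
    simp [(hk' hk).1, (hk' hk).2]

/-- The discrete scalar curl, from velocities on cell edges to vorticities at the interior
vertices of the grid. -/
noncomputable def Cmac (n : ℕ) : Matrix (Fin (n - 1) × Fin (n - 1))
    ((Fin n × Fin (n - 1)) ⊕ (Fin (n - 1) × Fin n)) ℝ :=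
  Matrix.fromCols ((BD n)ᵀ ⊗ₖ (1 : Matrix (Fin (n - 1)) (Fin (n - 1)) ℝ))
    (-((1 : Matrix (Fin (n - 1)) (Fin (n - 1)) ℝ) ⊗ₖ (BD n)ᵀ))

/-- The contribution of the no-slip walls: it acts on the tangential velocities next to the
boundary. -/
noncomputable def Wmac (n : ℕ) :
    Matrix ((Fin n × Fin (n - 1)) ⊕ (Fin (n - 1) × Fin n))
      ((Fin n × Fin (n - 1)) ⊕ (Fin (n - 1) × Fin n)) ℝ :=
  Matrix.fromBlocks (E0 n ⊗ₖ (1 : Matrix (Fin (n - 1)) (Fin (n - 1)) ℝ)) 0 0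
    ((1 : Matrix (Fin (n - 1)) (Fin (n - 1)) ℝ) ⊗ₖ E0 n)

/-- Discrete form of `-Δ = -grad div + curl curl`, up to the wall term. -/
lemma negL_eq (n : ℕ) (hn : 2 ≤ n) :
    negL n = Gmac n * (Gmac n)ᵀ + ((Cmac n)ᵀ * Cmac n + (2 : ℝ) • Wmac n) := by
  rw [negL, Gmac, Cmac, Wmac, TD_eq, TE_eq n hn, Matrix.transpose_fromRows,
    Matrix.transpose_fromCols, Matrix.fromRows_mul_fromCols, Matrix.fromRows_mul_fromCols,
    Matrix.fromBlocks_smul, Matrix.fromBlocks_add, Matrix.fromBlocks_add]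
  simp only [Matrix.transpose_neg, ← Matrix.kroneckerMap_transpose, Matrix.transpose_transpose,
    Matrix.transpose_one, ← Matrix.mul_kronecker_mul, Matrix.neg_mul, Matrix.mul_neg,
    Matrix.one_mul, Matrix.mul_one, neg_neg, smul_zero, add_zero, Matrix.add_kronecker,
    Matrix.kronecker_add, Matrix.smul_kronecker, Matrix.kronecker_smul, add_neg_cancel]
  congr 1
  abel

lemma E0_eq_diagonal (n : ℕ) :
    E0 n = Matrix.diagonal (fun i : Fin n => if (i : ℕ) = 0 ∨ (i : ℕ) = n - 1 then 1 else 0) := by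
  ext i j
  simp only [E0, Matrix.diagonal_apply, ite_and]

lemma Wmac_posSemidef (n : ℕ) : (Wmac n).PosSemidef := by
  rw [Wmac, E0_eq_diagonal, ← Matrix.diagonal_one, Matrix.diagonal_kronecker_diagonal,
    Matrix.diagonal_kronecker_diagonal, Matrix.fromBlocks_diagonal]
  apply Matrix.PosSemidef.diagonal
  rintro (i | i) <;> simp only [Sum.elim_inl, Sum.elim_inr, Pi.zero_apply, mul_one, one_mul] <;>
    split_ifs <;> norm_num

lemma negL_sub_posSemidef (n : ℕ) (hn : 2 ≤ n) :
    (negL n - Gmac n * (Gmac n)ᵀ).PosSemidef := by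
  rw [negL_eq n hn, add_sub_cancel_left]
  have hC : ((Cmac n)ᵀ * Cmac n).PosSemidef := by
    simpa using Matrix.posSemidef_conjTranspose_mul_self (Cmac n)
  exact hC.add ((Wmac_posSemidef n).smul (by norm_num))

lemma BD_transpose_sum (n : ℕ) (f : Fin n → ℝ) (k : ℕ) (hk : k + 1 < n) :
    ∑ b, BD n b ⟨k, by omega⟩ * f b = f ⟨k + 1, hk⟩ - f ⟨k, by omega⟩ := by
  have h : ∀ b : Fin n, BD n b ⟨k, by omega⟩ * f b =
      (if b = ⟨k + 1, hk⟩ then f b else 0) - (if b = ⟨k, by omega⟩ then f b else 0) := by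
    intro b
    simp only [BD, Fin.ext_iff]
    split_ifs <;> first | omega | ring
  simp only [h, Finset.sum_sub_distrib, Finset.sum_ite_eq', Finset.mem_univ, if_true]

/-- The kernel of the discrete gradient consists of the constants. -/
lemma Gmac_ker (n : ℕ) (hn : 2 ≤ n) (p : Fin n × Fin n → ℝ) (h : (Gmac n).mulVec p = 0) :
    ∀ i, p i = p (⟨0, by omega⟩, ⟨0, by omega⟩) := by
  have hx : ∀ (i : Fin n) (k : ℕ) (hk : k + 1 < n),
      p (i, ⟨k + 1, hk⟩) = p (i, ⟨k, by omega⟩) := by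
    intro i k hk
    have h1 := congrFun h (Sum.inl (i, ⟨k, by omega⟩))
    simp only [Gmac, Matrix.mulVec, dotProduct, Matrix.fromRows_apply_inl,
      Matrix.kroneckerMap_apply, Matrix.transpose_apply, Fintype.sum_prod_type,
      Matrix.one_apply, ite_mul, one_mul, zero_mul, Finset.sum_ite_irrel,
      Finset.sum_const_zero, Finset.sum_ite_eq, Finset.mem_univ, if_true,
      Pi.zero_apply] at h1
    rw [BD_transpose_sum n (fun b => p (i, b)) k hk] at h1
    linarith
  have hy : ∀ (j : Fin n) (k : ℕ) (hk : k + 1 < n),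
      p (⟨k + 1, hk⟩, j) = p (⟨k, by omega⟩, j) := by
    intro j k hk
    have h1 := congrFun h (Sum.inr (⟨k, by omega⟩, j))
    simp only [Gmac, Matrix.mulVec, dotProduct, Matrix.fromRows_apply_inr,
      Matrix.kroneckerMap_apply, Matrix.transpose_apply, Fintype.sum_prod_type,
      Matrix.one_apply, mul_ite, mul_one, mul_zero, ite_mul, zero_mul,
      Finset.sum_ite_eq, Finset.mem_univ, if_true, Pi.zero_apply] at h1
    rw [BD_transpose_sum n (fun b => p (b, j)) k hk] at h1
    linarith
  have hx' : ∀ (i : Fin n) (k : ℕ) (hk : k < n), p (i, ⟨k, hk⟩) = p (i, ⟨0, by omega⟩) := by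
    intro i k
    induction k with
    | zero => intro _; rfl
    | succ k ih => intro hk; rw [hx i k hk, ih]
  have hy' : ∀ (j : Fin n) (k : ℕ) (hk : k < n), p (⟨k, hk⟩, j) = p (⟨0, by omega⟩, j) := by
    intro j k
    induction k with
    | zero => intro _; rfl
    | succ k ih => intro hk; rw [hy j k hk, ih]
  rintro ⟨⟨i, hi⟩, ⟨j, hj⟩⟩
  rw [hx', hy']

/-- for the rescaled unsteady Stokes problem with `A_ε = I + ε²(-L)` and Schur
complement `S = Gᵀ A_ε⁻¹ G`, under the uniform discrete inf-sup property with constant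
`β ∈ (0,1]`, every eigenvalue `λ` of the preconditioned Schur complement `𝕊⁻¹ S`
(with `𝕊⁻¹ = (-L^c)⁻¹ + ε² I`, `-L^c = Gᵀ G` acting on zero-mean vectors, eigenvector
`p ≠ 0`) satisfies `β² ≤ λ ≤ 1`. -/
theorem stmt_18 (n : ℕ) (hn : 2 ≤ n) (ε : ℝ) (β : ℝ) (hβ0 : 0 < β) (hβ1 : β ≤ 1)
    (hinfsup : ∀ w : Fin n × Fin n → ℝ,
      β ^ 2 * ((negL n).mulVec ((Gmac n).mulVec w) ⬝ᵥ (Gmac n).mulVec w) ≤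
        (Gmac n * (Gmac n)ᵀ).mulVec ((Gmac n).mulVec w) ⬝ᵥ (Gmac n).mulVec w)
    (lam : ℝ) (p φ : Fin n × Fin n → ℝ) (hp : p ≠ 0)
    (hpsum : (∑ i, p i) = 0) (hφsum : (∑ i, φ i) = 0)
    (hφ : ((Gmac n)ᵀ * Gmac n).mulVec φ =
      ((Gmac n)ᵀ * (1 + ε ^ 2 • negL n)⁻¹ * Gmac n).mulVec p)
    (heig : φ + ε ^ 2 • ((Gmac n)ᵀ * (1 + ε ^ 2 • negL n)⁻¹ * Gmac n).mulVec p = lam • p) :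
    β ^ 2 ≤ lam ∧ lam ≤ 1 := by
  refine schur_bounds (negL n) (Gmac n) (negL_sub_posSemidef n hn) ε β hβ0 hβ1 hinfsup lam p φ
    (fun hG => hp ?_) hφ heig
  -- a constant vector of zero mean vanishes
  have hc := Gmac_ker n hn p hG
  rw [Finset.sum_congr rfl (fun i _ => hc i), Finset.sum_const, nsmul_eq_mul,
    mul_eq_zero] at hpsum
  have hcard : ((Finset.univ : Finset (Fin n × Fin n)).card : ℝ) ≠ 0 := by
    simp only [Finset.card_univ, Fintype.card_prod, Fintype.card_fin]
    exact_mod_cast (Nat.mul_pos (by omega) (by omega)).ne'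
  funext i
  rw [hc i]
  exact hpsum.resolve_left hcard
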